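/- arXiv:2006.05152 — 3 statements merged into one kernel-verified Lean document; each statement's English description precedes it below -/
import Mathlib

section
/- Let f : ℝ^d → ℝ be differentiable with L-Lipschitz gradient (‖∇f(u) − ∇f(v)‖ ≤ L‖u − v‖ for all u, v), let β > 0, let ω ∈ ℝ^d, and let Δ ∈ {−1, 1}^d be any sign vector. Then the two-point SPSA gradient estimate satisfies the pointwise norm bound ‖Δ·(f(ω + βΔ) − f(ω − βΔ))/(2β)‖ ≤ d·‖∇f(ω)‖ + (L/2)·β·d^{3/2}, where ‖·‖ is the Euclidean norm. -/
/-- Pointwise norm bound for the two-point SPSA gradient estimate: if `f` is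
differentiable with `L`-Lipschitz gradient `f'`, `β > 0`, and `Δ ∈ {-1,1}^d` is any
sign vector, then
`‖Δ · (f(ω + βΔ) - f(ω - βΔ)) / (2β)‖ ≤ d ‖∇f(ω)‖ + (L/2) β d^{3/2}`. -/
theorem spsa_estimate_pointwise_norm_bound
    (d : ℕ) (f : EuclideanSpace ℝ (Fin d) → ℝ)
    (f' : EuclideanSpace ℝ (Fin d) → EuclideanSpace ℝ (Fin d))
    (hgrad : ∀ u, HasGradientAt f (f' u) u)
    (L : NNReal) (hlip : LipschitzWith L f')
    (β : ℝ) (hβ : 0 < β)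
    (ω Δ : EuclideanSpace ℝ (Fin d))
    (hΔ : ∀ i, Δ i = 1 ∨ Δ i = -1) :
    ‖((f (ω + β • Δ) - f (ω - β • Δ)) / (2 * β)) • Δ‖ ≤
      (d : ℝ) * ‖f' ω‖ + (L : ℝ) / 2 * β * (d : ℝ) ^ ((3 : ℝ) / 2) := by
  have hline : ∀ (v : EuclideanSpace ℝ (Fin d)) (t : ℝ),
      HasDerivAt (fun t : ℝ => f (ω + t • v)) (inner ℝ (f' (ω + t • v)) v) t := by
    intro v t
    have h1 : HasDerivAt (fun t : ℝ => ω + t • v) v t := by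
      simpa using ((hasDerivAt_id t).smul_const v).const_add ω
    have h2 := (hgrad (ω + t • v)).hasFDerivAt.comp_hasDerivAt t h1
    rw [InnerProductSpace.toDual_apply_apply] at h2
    exact h2
  have hgn : ∀ (v : EuclideanSpace ℝ (Fin d)) (t : ℝ), 0 ≤ t →
      |inner ℝ (f' (ω + t • v)) v| ≤ (‖f' ω‖ + L * (t * ‖v‖)) * ‖v‖ := by
    intro v t ht
    refine (abs_real_inner_le_norm _ _).trans ?_
    gcongr
    have h1 := hlip.norm_sub_le (ω + t • v) ω
    rw [add_sub_cancel_left, norm_smul, Real.norm_of_nonneg ht] at h1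
    have h2 := norm_sub_norm_le (f' (ω + t • v)) (f' ω)
    linarith
  have hmain := image_norm_le_of_norm_deriv_right_le_deriv_boundary
    (f := fun t : ℝ => f (ω + t • Δ) - f (ω + t • (-Δ)))
    (f' := fun t : ℝ => inner ℝ (f' (ω + t • Δ)) Δ - inner ℝ (f' (ω + t • (-Δ))) (-Δ))
    (a := 0) (b := β)
    (B := fun t : ℝ => ‖Δ‖ * (2 * ‖f' ω‖ * t + L * ‖Δ‖ * t ^ 2))
    (B' := fun t : ℝ => ‖Δ‖ * (2 * ‖f' ω‖ + L * ‖Δ‖ * (2 * t)))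
    (fun t _ => ((hline Δ t).sub (hline (-Δ) t)).continuousAt.continuousWithinAt)
    (fun t _ => ((hline Δ t).sub (hline (-Δ) t)).hasDerivWithinAt)
    (by simp)
    (fun t => by
      have h := (((hasDerivAt_id t).const_mul (2 * ‖f' ω‖)).add
        (((hasDerivAt_id t).pow 2).const_mul (L * ‖Δ‖))).const_mul ‖Δ‖
      refine h.congr_deriv ?_
      simp)
    (fun t ht => by
      have h1 := hgn Δ t ht.1
      have h2 := hgn (-Δ) t ht.1
      rw [norm_neg] at h2
      rw [Real.norm_eq_abs]
      refine (abs_sub _ _).trans ?_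
      linarith)
    (x := β) ⟨hβ.le, le_rfl⟩
  simp only [smul_neg, ← sub_eq_add_neg] at hmain
  have hsq : ‖Δ‖ ^ 2 = d := by
    rw [EuclideanSpace.real_norm_sq_eq]
    have : ∀ i, Δ i ^ 2 = 1 := fun i => by rcases hΔ i with h | h <;> simp [h]
    simp [this]
  have hpow : (d : ℝ) ^ ((3 : ℝ) / 2) = ‖Δ‖ ^ 3 := by
    rw [← hsq, ← Real.rpow_natCast, ← Real.rpow_natCast, ← Real.rpow_mul (norm_nonneg _)]
    norm_num
  rw [hpow, ← hsq, norm_smul, norm_div, Real.norm_of_nonneg (by positivity : 0 ≤ 2 * β)]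
  calc _ ≤ (‖Δ‖ * (2 * ‖f' ω‖ * β + L * ‖Δ‖ * β ^ 2)) / (2 * β) * ‖Δ‖ := by gcongr
    _ = _ := by field_simp
end

section
/- (Chung's lemma.) Let {v_n}_{n≥1} be a sequence of nonnegative real numbers, {a_n}_{n≥1} a sequence with a_n ∈ (0, 1] for all n, and {b_n}_{n≥1} a sequence of nonnegative reals, such that v_n ≤ (1 − a_n)·v_{n−1} + b_n for all n ≥ 1. If Σ_{n≥1} a_n = ∞ and b_n / a_n → 0 as n → ∞, then v_n → 0 as n → ∞. -/
open Filter

/-- **Chung's lemma.** If `{v_n}` is a sequence of nonnegative reals, `a_n ∈ (0,1]`,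
`b_n ≥ 0`, and `v_n ≤ (1 - a_n) v_{n-1} + b_n` for all `n ≥ 1`, with `Σ_{n≥1} a_n = ∞`
and `b_n / a_n → 0`, then `v_n → 0`. -/
theorem chung_lemma (v a b : ℕ → ℝ)
    (hv : ∀ n, 0 ≤ v n)
    (ha : ∀ n, 1 ≤ n → a n ∈ Set.Ioc (0 : ℝ) 1)
    (hb : ∀ n, 1 ≤ n → 0 ≤ b n)
    (hrec : ∀ n, 1 ≤ n → v n ≤ (1 - a n) * v (n - 1) + b n)
    (hadiv : ¬ Summable (fun n => a (n + 1)))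
    (hba : Tendsto (fun n => b n / a n) atTop (nhds 0)) :
    Tendsto v atTop (nhds 0) := by
  rw [Metric.tendsto_atTop]
  intro ε hε
  obtain ⟨N, hN⟩ := (Metric.tendsto_atTop.1 hba) (ε / 2) (by linarith)
  have hb2 : ∀ k, b (N + k + 1) ≤ ε / 2 * a (N + k + 1) := by
    intro k
    have h := hN (N + k + 1) (by omega)
    rw [Real.dist_eq, sub_zero] at h
    have h2 := (abs_lt.1 h).2
    have ha1 := (ha (N + k + 1) (by omega)).1
    rw [div_lt_iff₀ ha1] at h2
    exact h2.le
  have hS : Tendsto (fun k => ∑ i ∈ Finset.range k, a (N + i + 1)) atTop atTop := by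
    refine (not_summable_iff_tendsto_nat_atTop_of_nonneg ?_).1 ?_
    · intro i
      exact (ha (N + i + 1) (by omega)).1.le
    · intro h
      apply hadiv
      rw [← summable_nat_add_iff N]
      refine h.congr ?_
      intro i
      rw [add_comm N i]
  have key : ∀ k, v (N + k) - ε / 2 ≤
      Real.exp (-∑ i ∈ Finset.range k, a (N + i + 1)) * v N := by
    intro k
    induction k with
    | zero => simp; linarith
    | succ k ih =>
      have h1 := hrec (N + k + 1) (by omega)
      have h2 := hb2 k
      obtain ⟨h3, h4⟩ := ha (N + k + 1) (by omega)
      simp only [Nat.add_sub_cancel] at h1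
      have h5 := mul_le_mul_of_nonneg_left ih (sub_nonneg.2 h4)
      have h6 : 1 - a (N + k + 1) ≤ Real.exp (-a (N + k + 1)) :=
        Real.one_sub_le_exp_neg _
      have h7 := mul_le_mul_of_nonneg_right h6
        (mul_nonneg (Real.exp_pos (-∑ i ∈ Finset.range k, a (N + i + 1))).le (hv N))
      rw [Finset.sum_range_succ, neg_add, Real.exp_add, ← add_assoc]
      linarith
  have hlim : Tendsto (fun k => Real.exp (-∑ i ∈ Finset.range k, a (N + i + 1)) * v N)
      atTop (nhds 0) := by
    have h := (Real.tendsto_exp_neg_atTop_nhds_zero.comp hS).mul_const (v N)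
    rw [zero_mul] at h
    exact h
  obtain ⟨K, hK⟩ := eventually_atTop.1 (hlim.eventually_lt_const (half_pos hε))
  refine ⟨N + K, fun n hn => ?_⟩
  obtain ⟨k, rfl⟩ := Nat.exists_eq_add_of_le (show N ≤ n by omega)
  have h1 := hK k (by omega)
  have h2 := key k
  rw [Real.dist_eq, sub_zero, abs_of_nonneg (hv _)]
  linarith
end

section
/- (Robbins–Siegmund lemma, simplified form.) Let (Ω, F, P) be a probability space with filtration {F_n}_{n≥0}, and let {V_n}_{n≥0} be a sequence of nonnegative integrable random variables such that V_n is F_n-measurable. Let {a_n}_{n≥1} and {b_n}_{n≥1} be sequences of nonnegative reals with Σ_{n≥1} a_n < ∞ and Σ_{n≥1} b_n < ∞. If E[V_n | F_{n−1}] ≤ (1 + a_n)·V_{n−1} + b_n almost surely for every n ≥ 1, then the sequence {V_n} converges almost surely to a finite nonnegative random variable. -/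
open MeasureTheory Filter

/-- **Robbins–Siegmund lemma (simplified form).** Let `{V_n}` be nonnegative integrable
random variables adapted to a filtration `{F_n}`, and let `{a_n}`, `{b_n}` be
nonnegative summable sequences of reals. If
`E[V_n | F_{n-1}] ≤ (1 + a_n) V_{n-1} + b_n` almost surely for every `n ≥ 1`, then
`{V_n}` converges almost surely to a finite nonnegative random variable. -/
theorem robbins_siegmund_simplified
    {Ω : Type*} {m0 : MeasurableSpace Ω} {P : Measure Ω} [IsProbabilityMeasure P]
    (F : Filtration ℕ m0)
    (V : ℕ → Ω → ℝ)
    (hadapted : ∀ n, StronglyMeasurable[F n] (V n))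
    (hnonneg : ∀ n ω, 0 ≤ V n ω)
    (hint : ∀ n, Integrable (V n) P)
    (a b : ℕ → ℝ)
    (ha : ∀ n, 0 ≤ a n) (hb : ∀ n, 0 ≤ b n)
    (hasum : Summable (fun n => a (n + 1)))
    (hbsum : Summable (fun n => b (n + 1)))
    (hrec : ∀ n, 1 ≤ n →
      ∀ᵐ ω ∂P, (P[V n | F (n - 1)]) ω ≤ (1 + a n) * V (n - 1) ω + b n) :
    ∀ᵐ ω ∂P, ∃ c : ℝ, 0 ≤ c ∧ Tendsto (fun n => V n ω) atTop (nhds c) := by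
  set p : ℕ → ℝ := fun n => ∏ i ∈ Finset.range n, (1 + a (i + 1)) with hp
  have hp_pos : ∀ n, 0 < p n := fun n =>
    Finset.prod_pos fun i _ => by linarith [ha (i + 1)]
  have hp_succ : ∀ n, p (n + 1) = p n * (1 + a (n + 1)) := fun n =>
    Finset.prod_range_succ _ _
  have hp_one : ∀ n, 1 ≤ p n := by
    intro n
    induction n with
    | zero => simp [hp]
    | succ n ih => rw [hp_succ]; nlinarith [ha (n + 1)]
  set S : ℕ → ℝ := fun n => ∑ i ∈ Finset.range n, b (i + 1) / p (i + 1) with hS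
  have hS_succ : ∀ n, S (n + 1) = S n + b (n + 1) / p (n + 1) := fun n =>
    Finset.sum_range_succ _ _
  have hterm : ∀ n, 0 ≤ b (n + 1) / p (n + 1) := fun n => div_nonneg (hb _) (hp_pos _).le
  have hSsum : Summable (fun n => b (n + 1) / p (n + 1)) :=
    Summable.of_nonneg_of_le hterm (fun n => div_le_self (hb _) (hp_one _)) hbsum
  have hSlim : Tendsto S atTop (nhds (∑' n, b (n + 1) / p (n + 1))) :=
    hSsum.hasSum.tendsto_sum_nat
  set B : ℝ := ∑' n, b (n + 1) / p (n + 1) with hB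
  have hSB : ∀ n, S n ≤ B := fun n => hSsum.sum_le_tsum _ (fun i _ => hterm i)
  have hB0 : 0 ≤ B := tsum_nonneg hterm
  have hplim : ∃ L, Tendsto p atTop (nhds L) :=
    ⟨_, (Real.multipliable_one_add_of_summable hasum).hasProd.tendsto_prod_nat⟩
  obtain ⟨L, hL⟩ := hplim
  set W : ℕ → Ω → ℝ := fun n ω => (p n)⁻¹ * V n ω - S n with hW
  have hWint : ∀ n, Integrable (W n) P := fun n =>
    ((hint n).const_mul _).sub (integrable_const _)
  have hsup : Supermartingale W F P := by
    refine supermartingale_nat ?_ hWint ?_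
    · intro n
      exact ((hadapted n).const_mul _).sub stronglyMeasurable_const
    · intro n
      have h1 : P[W (n + 1) | F n] =ᵐ[P]
          fun ω => (p (n + 1))⁻¹ * (P[V (n + 1) | F n]) ω - S (n + 1) := by
        have e1 := condExp_sub (m := F n) ((hint (n + 1)).const_mul (p (n + 1))⁻¹)
          (integrable_const (μ := P) (S (n + 1)))
        have e2 := condExp_smul (μ := P) (p (n + 1))⁻¹ (V (n + 1)) (F n)
        have e3 := condExp_const (μ := P) (F.le n) (S (n + 1))
        filter_upwards [e1, e2] with ω h1 h2
        refine h1.trans ?_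
        rw [Pi.sub_apply, e3]
        congr 1
      have h2 := hrec (n + 1) (by omega)
      simp only [Nat.add_sub_cancel] at h2
      filter_upwards [h1, h2] with ω h1 h2
      rw [h1]
      have h3 := mul_le_mul_of_nonneg_left h2 (inv_nonneg.2 (hp_pos (n + 1)).le)
      have h4 : (p (n + 1))⁻¹ * ((1 + a (n + 1)) * V n ω + b (n + 1))
          = (p n)⁻¹ * V n ω + b (n + 1) / p (n + 1) := by
        have := hp_pos n
        have h5 : 0 < 1 + a (n + 1) := by linarith [ha (n + 1)]
        rw [hp_succ]
        field_simp
      simp only [hW]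
      rw [hS_succ]
      linarith
  have hmean : ∀ n, ∫ ω, W n ω ∂P ≤ ∫ ω, W 0 ω ∂P := by
    intro n
    have := hsup.setIntegral_le (Nat.zero_le n) MeasurableSet.univ
    simpa using this
  have hbdd : ∀ n, eLpNorm ((-W) n) 1 P ≤ (∫ ω, W 0 ω ∂P + 2 * B).toNNReal := by
    intro n
    have hneg : Integrable ((-W) n) P := (hWint n).neg
    rw [eLpNorm_one_eq_lintegral_enorm, ← ofReal_integral_norm_eq_lintegral_enorm hneg]
    refine ENNReal.ofReal_le_ofReal ?_
    calc ∫ ω, ‖(-W) n ω‖ ∂P ≤ ∫ ω, (W n ω + 2 * B) ∂P := by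
          refine integral_mono hneg.norm ((hWint n).add (integrable_const _)) ?_
          intro ω
          have h0 : 0 ≤ (p n)⁻¹ * V n ω := mul_nonneg (inv_nonneg.2 (hp_pos n).le) (hnonneg n ω)
          simp only [Pi.neg_apply, norm_neg, Real.norm_eq_abs, hW]
          rw [abs_le]
          constructor <;> linarith [hSB n]
      _ = ∫ ω, W n ω ∂P + 2 * B := by
          rw [integral_add (hWint n) (integrable_const _)]; simp
      _ ≤ _ := by linarith [hmean n]
  filter_upwards [hsup.neg.exists_ae_tendsto_of_bdd hbdd] with ω hω
  obtain ⟨c, hc⟩ := hω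
  have hV : Tendsto (fun n => V n ω) atTop (nhds (L * (-c + B))) := by
    refine (hL.mul (hc.neg.add hSlim)).congr ?_
    intro n
    have := (hp_pos n).ne'
    simp only [Pi.neg_apply, hW]
    field_simp
    ring
  exact ⟨_, ge_of_tendsto' hV (fun n => hnonneg n ω), hV⟩
end
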